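/- Assume the loss has the form ℓ(w,x,y) = ℓ(f_w(x),y) with values in [0,1]. Then the subtask generalization error satisfies |gen_{Q,E_Q}| ≤ E_{Y'~Q_Y}[E_{Z_{[2n]}}[(1/n^{Y'}) Σ_{i=1}^n sqrt(2·max(𝟙{Y_i^-=Y'}, 𝟙{Y_i^+=Y'})·I_{Z_{[2n]}}(f_W(X_i^±);U_i))]]. -/

import Mathlib

open MeasureTheory ProbabilityTheory
open scoped ENNReal

noncomputable section

open Classical in
/-- Kullback–Leibler divergence: `∞` unless `μ ≪ ν` and the log-likelihood ratio is
`μ`-integrable. -/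
def KL {α : Type*} [MeasurableSpace α] (μ ν : Measure α) : ℝ≥0∞ :=
  if μ ≪ ν ∧ Integrable (llr μ ν) μ then ENNReal.ofReal (∫ x, llr μ ν x ∂μ) else ∞

/-- Fair coin measure on `Bool` (the law of a uniform `{−1,+1}` selector, `true ↔ +1`). -/
def coin : Measure Bool :=
  (2 : ℝ≥0∞)⁻¹ • Measure.dirac true + (2 : ℝ≥0∞)⁻¹ • Measure.dirac false

/-- Disintegrated conditional mutual information `I_z(A;B)` given `Z = z`, defined through
regular conditional distributions: `KL(P_{A,B|Z=z} ‖ P_{A|Z=z} ⊗ P_{B|Z=z})`. -/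
def dCMI {Ω γ α β : Type*} [MeasurableSpace Ω] [MeasurableSpace γ]
    [MeasurableSpace α] [StandardBorelSpace α] [Nonempty α]
    [MeasurableSpace β] [StandardBorelSpace β] [Nonempty β]
    (μ : Measure Ω) [IsFiniteMeasure μ]
    (A : Ω → α) (B : Ω → β) (Z : Ω → γ) (z : γ) : ℝ≥0∞ :=
  KL (condDistrib (fun ω => (A ω, B ω)) Z μ z)
    ((condDistrib A Z μ z).prod (condDistrib B Z μ z))

/-- The super-sample entry selected by `u`, i.e. `z^{u}` (the training sample):
`zz = (z⁻, z⁺)` and `u = true` means `+1`. -/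
def trainSel {𝒵 : Type*} (zz : 𝒵 × 𝒵) (u : Bool) : 𝒵 := if u then zz.2 else zz.1

/-- The super-sample entry not selected by `u`, i.e. `z^{−u}` (the test sample). -/
def testSel {𝒵 : Type*} (zz : 𝒵 × 𝒵) (u : Bool) : 𝒵 := if u then zz.1 else zz.2

instance coin_prob : IsProbabilityMeasure coin := by
  constructor
  simp [coin, ENNReal.inv_two_add_inv_two]

lemma integral_coin (h : Bool → ℝ) : ∫ b, h b ∂coin = (h true + h false) / 2 := by
  unfold coin
  rw [integral_add_measure ((Integrable.of_finite (μ := Measure.dirac true)).smul_measure (by simp))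
    ((Integrable.of_finite (μ := Measure.dirac false)).smul_measure (by simp))]
  simp [integral_smul_measure]
  ring

/-- Donsker–Varadhan step with a symmetrised bounded function. -/
lemma KL_coin_bound {α : Type*} [MeasurableSpace α] (P : Measure (α × Bool))
    [IsProbabilityMeasure P] (ν : Measure α) [IsProbabilityMeasure ν]
    (g : α → ℝ) (hg : Measurable g) (hg1 : ∀ a, |g a| ≤ 1) :
    ENNReal.ofReal |∫ p, (if p.2 then g p.1 else - g p.1) ∂P|
      ≤ (2 * KL P (ν.prod coin)) ^ (1 / 2 : ℝ) := by
  unfold KL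
  split_ifs with hc
  swap
  · rw [ENNReal.mul_top (by norm_num), ENNReal.top_rpow_of_pos (by norm_num)]
    exact le_top
  obtain ⟨hac, hIntg⟩ := hc
  have hm : Measurable (fun p : α × Bool => if p.2 then g p.1 else - g p.1) := by
    apply Measurable.ite _ (by fun_prop) (by fun_prop)
    exact measurable_snd (measurableSet_singleton true)
  have hb : ∀ p : α × Bool, |if p.2 then g p.1 else - g p.1| ≤ 1 := by
    intro p
    split_ifs
    · exact hg1 _
    · rw [abs_neg]; exact hg1 _
  set h : α × Bool → ℝ := fun p => if p.2 then g p.1 else - g p.1 with hh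
  set m := ∫ p, h p ∂P with hmdef
  have hiP : Integrable (fun p => m * h p) P := by
    apply Integrable.const_mul
    exact Integrable.of_bound hm.aestronglyMeasurable 1 (ae_of_all _ hb)
  have hiQ : Integrable (fun p => Real.exp (m * h p)) (ν.prod coin) := by
    refine Integrable.of_bound (by fun_prop) (Real.exp |m|) (ae_of_all _ fun p => ?_)
    rw [Real.norm_eq_abs, Real.abs_exp]
    apply Real.exp_le_exp.2
    calc m * h p ≤ |m * h p| := le_abs_self _
      _ = |m| * |h p| := abs_mul _ _
      _ ≤ |m| * 1 := by gcongr; exact hb p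
      _ = |m| := mul_one _
  have key := integral_llr_tilted_right hac hiP hiQ hIntg
  have hIntg2 := integrable_llr_tilted_right hac hiP hIntg hiQ
  have hprob := isProbabilityMeasure_tilted hiQ
  have hnn := InformationTheory.integral_llr_add_sub_measure_univ_nonneg
    (hac.trans (absolutelyContinuous_tilted hiQ)) hIntg2
  simp only [probReal_univ] at hnn
  have hpos : 0 < ∫ p, Real.exp (m * h p) ∂(ν.prod coin) := integral_exp_pos hiQ
  have hlog : Real.log (∫ p, Real.exp (m * h p) ∂(ν.prod coin)) ≤ m ^ 2 / 2 := by
    rw [Real.log_le_iff_le_exp hpos, integral_prod _ hiQ]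
    have : ∀ a, ∫ b, Real.exp (m * h (a, b)) ∂coin ≤ Real.exp (m ^ 2 / 2) := by
      intro a
      rw [integral_coin]
      have e : (Real.exp (m * h (a, true)) + Real.exp (m * h (a, false))) / 2
          = Real.cosh (m * g a) := by
        rw [Real.cosh_eq]; simp [hh]
      rw [e]
      refine (Real.cosh_le_exp_half_sq _).trans (Real.exp_le_exp.2 ?_)
      have : (g a) ^ 2 ≤ 1 := (sq_le_one_iff_abs_le_one _).2 (hg1 a)
      nlinarith [sq_nonneg m]
    calc _ ≤ ∫ _, Real.exp (m ^ 2 / 2) ∂ν := by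
          apply integral_mono hiQ.integral_prod_left (integrable_const _)
          exact this
      _ = _ := by simp
  rw [key, integral_const_mul, ← hmdef] at hnn
  set K := ∫ x, llr P (ν.prod coin) x ∂P
  have hK : m ^ 2 ≤ 2 * K := by nlinarith
  have h1 : |m| ≤ (2 * K) ^ (1 / 2 : ℝ) := by
    rw [← Real.sqrt_eq_rpow]
    exact Real.abs_le_sqrt hK
  have hK0 : 0 ≤ 2 * K := le_trans (sq_nonneg _) hK
  calc ENNReal.ofReal |m| ≤ ENNReal.ofReal ((2 * K) ^ (1 / 2 : ℝ)) := ENNReal.ofReal_le_ofReal h1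
    _ = _ := by
      rw [← ENNReal.ofReal_rpow_of_nonneg hK0 (by norm_num), ENNReal.ofReal_mul (by norm_num)]
      simp

/-- If `(Z, B)` has a product law with second marginal `ρ`, the conditional law is `ρ`. -/
lemma condDistrib_of_prod {Ω γ β : Type*} [MeasurableSpace Ω] [MeasurableSpace γ]
    [MeasurableSpace β] [StandardBorelSpace β] [Nonempty β]
    (μ : Measure Ω) [IsProbabilityMeasure μ] (Z : Ω → γ) (B : Ω → β)
    (hB : Measurable B) (ρ : Measure β) [IsProbabilityMeasure ρ]
    (h : μ.map (fun ω => (Z ω, B ω)) = (μ.map Z).prod ρ) :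
    ∀ᵐ z ∂(μ.map Z), condDistrib B Z μ z = ρ := by
  have := condDistrib_ae_eq_of_measure_eq_compProd (κ := Kernel.const γ ρ) Z hB.aemeasurable
    (by rw [h, Measure.compProd_const])
  filter_upwards [this] with z hz
  rw [hz, Kernel.const_apply]

lemma integral_condDistrib_eq {Ω γ β : Type*} [MeasurableSpace Ω] [MeasurableSpace γ]
    [MeasurableSpace β] [StandardBorelSpace β] [Nonempty β]
    (μ : Measure Ω) [IsProbabilityMeasure μ] (Z : Ω → γ) (hZ : Measurable Z) (B : Ω → β)
    (hB : Measurable B) (d : γ × β → ℝ) (hd : Measurable d) (C : ℝ) (hC : ∀ p, |d p| ≤ C) :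
    ∫ ω, d (Z ω, B ω) ∂μ = ∫ z, ∫ b, d (z, b) ∂(condDistrib B Z μ z) ∂(μ.map Z) := by
  have h : (μ.map Z) ⊗ₘ condDistrib B Z μ = μ.map fun a => (Z a, B a) :=
    compProd_map_condDistrib hB.aemeasurable
  have : IsProbabilityMeasure (μ.map Z) := Measure.isProbabilityMeasure_map hZ.aemeasurable
  rw [← Measure.integral_compProd, h, integral_map (by fun_prop) hd.aestronglyMeasurable]
  exact Integrable.of_bound hd.aestronglyMeasurable C (ae_of_all _ hC)

/-- **Subtask-f-CMI bound**: in the super-sample setting with predictions and a bounded loss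
`ℓ(f_w(x),y) ∈ [0,1]` and target label set `A` with `P(Y ∈ A) > 0`, the subtask
generalization error `gen_{Q,E_Q} = E_{Y'∼Q_Y}[gen_{Y'}]` satisfies
`|gen_{Q,E_Q}| ≤ E_{Y'∼Q_Y}[E_{Z_{[2n]}}[(1/n^{Y'}) Σ_i
    sqrt (2 max(𝟙{Y_i⁻=Y'},𝟙{Y_i⁺=Y'}) I_{Z_{[2n]}}(f_W(X_i^±);U_i))]]`,
where `Q_Y` is the law of the label conditioned on `{Y ∈ A}`. -/
theorem subtask_fCMI_bound
    {Ω 𝒲 𝒳 𝒴 Yhat : Type*}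
    [mΩ : MeasurableSpace Ω] [StandardBorelSpace Ω] [Nonempty Ω]
    [MeasurableSpace 𝒲] [StandardBorelSpace 𝒲] [Nonempty 𝒲]
    [MeasurableSpace 𝒳] [StandardBorelSpace 𝒳]
    [MeasurableSpace 𝒴] [Countable 𝒴] [MeasurableSingletonClass 𝒴] [DecidableEq 𝒴]
    [MeasurableSpace Yhat] [StandardBorelSpace Yhat] [Nonempty Yhat]
    (μ : Measure Ω) [IsProbabilityMeasure μ]
    (n : ℕ) (hn : 0 < n)
    (PZ : Measure (𝒳 × 𝒴)) [IsProbabilityMeasure PZ]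
    (Z : Ω → Fin n → (𝒳 × 𝒴) × (𝒳 × 𝒴)) (hZ : Measurable Z)
    (U : Ω → Fin n → Bool) (hU : Measurable U)
    (W : Ω → 𝒲) (hW : Measurable W)
    (hlaw : μ.map (fun ω => (Z ω, U ω)) =
      (Measure.pi fun _ : Fin n => PZ.prod PZ).prod (Measure.pi fun _ : Fin n => coin))
    (hSle : MeasurableSpace.comap (fun ω (i : Fin n) => trainSel (Z ω i) (U ω i))
        inferInstance ≤ mΩ)
    (hMarkov : CondIndepFun
      (MeasurableSpace.comap (fun ω (i : Fin n) => trainSel (Z ω i) (U ω i)) inferInstance)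
      hSle W (fun ω => (Z ω, U ω)) μ)
    (f : 𝒲 → 𝒳 → Yhat) (hf : Measurable fun p : 𝒲 × 𝒳 => f p.1 p.2)
    (ℓ : Yhat → 𝒴 → ℝ) (hℓ : Measurable fun p : Yhat × 𝒴 => ℓ p.1 p.2)
    (hℓ01 : ∀ p y', ℓ p y' ∈ Set.Icc (0 : ℝ) 1)
    -- the subtask label set
    (A : Set 𝒴) (hA : MeasurableSet A) (hPA : 0 < PZ (Prod.snd ⁻¹' A)) :
    ENNReal.ofReal
        |∫ y, (∫ ω, (1 / ((n : ℝ) * (PZ (Prod.snd ⁻¹' {y})).toReal)) *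
            ∑ i, ((if (testSel (Z ω i) (U ω i)).2 = y then
                    ℓ (f (W ω) (testSel (Z ω i) (U ω i)).1) (testSel (Z ω i) (U ω i)).2 else 0) -
                  (if (trainSel (Z ω i) (U ω i)).2 = y then
                    ℓ (f (W ω) (trainSel (Z ω i) (U ω i)).1) (trainSel (Z ω i) (U ω i)).2 else 0))
            ∂μ)
          ∂((PZ.map Prod.snd)[|A])|
      ≤ ∫⁻ y, (∫⁻ z, ENNReal.ofReal (1 / ((n : ℝ) * (PZ (Prod.snd ⁻¹' {y})).toReal)) *
            ∑ i, (2 * max (if (z i).1.2 = y then (1 : ℝ≥0∞) else 0)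
                          (if (z i).2.2 = y then (1 : ℝ≥0∞) else 0) *
                  dCMI μ (fun ω => (f (W ω) ((Z ω i).1.1), f (W ω) ((Z ω i).2.1)))
                    (fun ω => U ω i) Z z) ^ (1 / 2 : ℝ)
            ∂(μ.map Z))
          ∂((PZ.map Prod.snd)[|A]) := by
  have : IsProbabilityMeasure (μ.map Z) := Measure.isProbabilityMeasure_map hZ.aemeasurable
  have hZmap : μ.map Z = Measure.pi fun _ : Fin n => PZ.prod PZ := by
    have := congrArg (Measure.map Prod.fst) hlaw
    rw [Measure.map_map (by fun_prop) (by fun_prop), Measure.map_fst_prod] at this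
    simpa [Function.comp_def] using this
  have hUi : ∀ i, Measurable fun ω => U ω i := fun i => by fun_prop
  have hcoin : ∀ i, ∀ᵐ z ∂(μ.map Z), condDistrib (fun ω => U ω i) Z μ z = coin := by
    intro i
    apply condDistrib_of_prod μ Z _ (hUi i)
    have := congrArg (Measure.map (Prod.map id (Function.eval i))) hlaw
    rw [Measure.map_map (by fun_prop) (by fun_prop), ← Measure.map_prod_map _ _ (by fun_prop)
      (by fun_prop), (measurePreserving_eval (fun _ : Fin n => coin) i).map_eq,
      Measure.map_id, ← hZmap] at this
    simpa [Function.comp_def] using this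
  refine (Real.enorm_eq_ofReal_abs _).symm.trans_le
    ((enorm_integral_le_lintegral_enorm _).trans (lintegral_mono fun y => ?_))
  set c : ℝ := 1 / ((n : ℝ) * (PZ (Prod.snd ⁻¹' {y})).toReal) with hcdef
  have hc0 : 0 ≤ c := by positivity
  -- the symmetrised loss difference
  let G : Fin n → (Fin n → (𝒳 × 𝒴) × (𝒳 × 𝒴)) → Yhat × Yhat → ℝ := fun i z a =>
    (if (z i).1.2 = y then ℓ a.1 (z i).1.2 else 0) - (if (z i).2.2 = y then ℓ a.2 (z i).2.2 else 0)
  have hGm : ∀ i, Measurable fun p : (Fin n → (𝒳 × 𝒴) × (𝒳 × 𝒴)) × (Yhat × Yhat) =>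
      G i p.1 p.2 := by
    intro i
    have m1 : Measurable fun p : (Fin n → (𝒳 × 𝒴) × (𝒳 × 𝒴)) × (Yhat × Yhat) =>
        (p.1 i).1.2 := by fun_prop
    have m2 : Measurable fun p : (Fin n → (𝒳 × 𝒴) × (𝒳 × 𝒴)) × (Yhat × Yhat) =>
        (p.1 i).2.2 := by fun_prop
    refine Measurable.sub (Measurable.ite (m1 (measurableSet_singleton y)) ?_ measurable_const)
      (Measurable.ite (m2 (measurableSet_singleton y)) ?_ measurable_const)
    · exact hℓ.comp (Measurable.prodMk (by fun_prop) m1)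
    · exact hℓ.comp (Measurable.prodMk (by fun_prop) m2)
  have hGb : ∀ i z a, |G i z a| ≤ 1 := by
    intro i z a
    have h1 := hℓ01 a.1 (z i).1.2
    have h2 := hℓ01 a.2 (z i).2.2
    simp only [G, abs_le]
    split_ifs <;> constructor <;> linarith [h1.1, h1.2, h2.1, h2.2]
  let D : Fin n → (Fin n → (𝒳 × 𝒴) × (𝒳 × 𝒴)) × ((Yhat × Yhat) × Bool) → ℝ := fun i p =>
    if p.2.2 then G i p.1 p.2.1 else - G i p.1 p.2.1
  have hDm : ∀ i, Measurable (D i) := by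
    intro i
    have : Measurable fun p : (Fin n → (𝒳 × 𝒴) × (𝒳 × 𝒴)) × ((Yhat × Yhat) × Bool) =>
      G i p.1 p.2.1 := (hGm i).comp (Measurable.prodMk (by fun_prop) (by fun_prop))
    refine Measurable.ite ?_ this this.neg
    exact (measurable_snd.comp measurable_snd) (measurableSet_singleton true)
  have hDb : ∀ i p, |D i p| ≤ 1 := by
    intro i p
    simp only [D]
    split_ifs
    · exact hGb _ _ _
    · rw [abs_neg]; exact hGb _ _ _
  let Aᵢ : Fin n → Ω → Yhat × Yhat := fun i ω =>
    (f (W ω) ((Z ω i).1.1), f (W ω) ((Z ω i).2.1))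
  have hAm : ∀ i, Measurable (Aᵢ i) := by
    intro i
    refine Measurable.prodMk ?_ ?_
    · exact hf.comp (hW.prodMk (by fun_prop))
    · exact hf.comp (hW.prodMk (by fun_prop))
  have hBm : ∀ i, Measurable fun ω => (Aᵢ i ω, U ω i) := fun i => (hAm i).prodMk (hUi i)
  have hIntg : ∀ i, Integrable (fun ω => D i (Z ω, (Aᵢ i ω, U ω i))) μ := fun i =>
    Integrable.of_bound ((hDm i).comp (hZ.prodMk (hBm i))).aestronglyMeasurable 1
      (ae_of_all _ fun ω => hDb i _)
  have hIntg' : ∀ i, Integrable (fun z => ∫ b, D i (z, b)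
      ∂(condDistrib (fun ω => (Aᵢ i ω, U ω i)) Z μ z)) (μ.map Z) := fun i =>
    Integrable.integral_condDistrib_map (hBm i).aemeasurable
      ((integrable_map_measure (hDm i).aestronglyMeasurable
        (hZ.prodMk (hBm i)).aemeasurable).2 (hIntg i))
  have hrew : (∫ ω, c * ∑ i, ((if (testSel (Z ω i) (U ω i)).2 = y then
                    ℓ (f (W ω) (testSel (Z ω i) (U ω i)).1) (testSel (Z ω i) (U ω i)).2 else 0) -
                  (if (trainSel (Z ω i) (U ω i)).2 = y then
                    ℓ (f (W ω) (trainSel (Z ω i) (U ω i)).1) (trainSel (Z ω i) (U ω i)).2 else 0))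
            ∂μ) = ∫ z, c * ∑ i, ∫ b, D i (z, b)
              ∂(condDistrib (fun ω => (Aᵢ i ω, U ω i)) Z μ z) ∂(μ.map Z) := by
    rw [integral_const_mul, integral_const_mul, integral_finsetSum _ fun i _ => hIntg' i]
    congr 1
    simp_rw [← fun i => integral_condDistrib_eq μ Z hZ _ (hBm i) (D i) (hDm i) 1 (hDb i)]
    rw [← integral_finsetSum _ fun i _ => hIntg i]
    refine integral_congr_ae (ae_of_all _ fun ω => Finset.sum_congr rfl fun i _ => ?_)
    simp only [D, G, Aᵢ, testSel, trainSel]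
    cases U ω i <;> simp
  rw [hrew]
  refine (enorm_integral_le_lintegral_enorm _).trans (lintegral_mono_ae ?_)
  filter_upwards [ae_all_iff.2 hcoin] with z hz
  rw [enorm_mul, Real.enorm_eq_ofReal hc0]
  gcongr
  refine (enorm_sum_le _ _).trans (Finset.sum_le_sum fun i _ => ?_)
  rw [Real.enorm_eq_ofReal_abs]
  by_cases hy : (z i).1.2 = y ∨ (z i).2.2 = y
  · have hmax : max (if (z i).1.2 = y then (1 : ℝ≥0∞) else 0)
        (if (z i).2.2 = y then (1 : ℝ≥0∞) else 0) = 1 := by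
      rcases hy with h | h <;> simp only [h, if_true] <;> split_ifs <;> simp
    rw [hmax, mul_one, dCMI, hz i]
    exact KL_coin_bound _ _ (G i z) ((hGm i).comp (measurable_const.prodMk measurable_id))
      (hGb i z)
  · push Not at hy
    have : ∀ b, D i (z, b) = 0 := by
      intro b; simp [D, G, hy.1, hy.2]
    simp [this]
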